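/- arXiv:1710.03952 — 3 statements merged into one kernel-verified Lean document; each statement's English description precedes it below -/
import Mathlib

section
/- Let n ≥ 1 be an integer, let 0 < ε < π/2 and τ > ε. Let f be a nonnegative, not identically zero, sin^n-concave function on [0, τ] that attains its maximum at 0, and let C > 0 be chosen so that f(ε) = C·cos(ε)^n; set h(t) = C·cos(t)^n. Then τ ≤ π/2, and f(x) ≥ h(x) for all x ∈ [0, ε], while f(x) ≤ h(x) for all x ∈ [ε, τ]. -/
open Real Set

/-- A function `f` is `sin^N`-concave on a set `I ⊆ ℝ` if for all `x1, x2 ∈ I`,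
`f((x1+x2)/2)^{1/N} ≥ (f(x1)^{1/N} + f(x2)^{1/N}) / (2 cos(|x2 − x1|/2))`. -/
def SinConcaveOn (N : ℝ) (f : ℝ → ℝ) (I : Set ℝ) : Prop :=
  ∀ x1 ∈ I, ∀ x2 ∈ I,
    (f x1 ^ (1 / N) + f x2 ^ (1 / N)) / (2 * Real.cos (|x2 - x1| / 2))
      ≤ f ((x1 + x2) / 2) ^ (1 / N)

/-!
Put `g = f ^ (1 / N)`, so that `g x + g y ≤ 2 cos ((x - y) / 2) g ((x + y) / 2)`, with equality
for sinusoids. A function of this kind, bounded below on `[a, b]` with `b - a < π` and nonnegative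
at the ends, is nonnegative: compare it with the sinusoid `v x = cos (x - (a + b) / 2)`, which is
positive there. If `μ v ≤ g` with `μ ≤ 0`, applying the inequality to the end nearer to `x` and its
reflection in `x` improves `μ` by the fixed factor `1 / (1 + cos ((b - a) / 2)) < 1`. Subtracting
the sinusoid that interpolates `g` at the ends gives a three-point inequality that plays the part of
concavity. A maximum at the left end `0` then forces `g y ≤ g 0 * cos y`; inserted into the
three-point inequality on `[0, y]`, this bound shows that `g / cos` decreases.
-/

open Filter Topology

/-- Midpoint form of trigonometric concavity, the sense in which `N`-th roots of `sin^N`-concave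
functions are concave: `g ((x + y) / 2)` dominates the value at the midpoint of the sinusoid
agreeing with `g` at `x` and `y`. Only `|x - y| < π` is considered, where the cosine is positive. -/
def MidpointTrigConcaveOn (I : Set ℝ) (g : ℝ → ℝ) : Prop :=
  ∀ ⦃x⦄, x ∈ I → ∀ ⦃y⦄, y ∈ I → |x - y| < π →
    g x + g y ≤ 2 * cos ((x - y) / 2) * g ((x + y) / 2)

lemma isMaxOn_rpow {I : Set ℝ} {f : ℝ → ℝ} {a p : ℝ} (hp : 0 ≤ p) (hf : ∀ x ∈ I, 0 ≤ f x)
    (hmax : IsMaxOn f I a) : IsMaxOn (fun x => f x ^ p) I a :=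
  isMaxOn_iff.2 fun x hx => rpow_le_rpow (hf x hx) (isMaxOn_iff.1 hmax x hx) hp

lemma SinConcaveOn.midpointTrigConcaveOn_rpow {N : ℝ} {f : ℝ → ℝ} {I : Set ℝ}
    (hf : SinConcaveOn N f I) : MidpointTrigConcaveOn I (fun x => f x ^ (1 / N)) := by
  intro x hx y hy hxy
  have hcos : cos (|y - x| / 2) = cos ((x - y) / 2) := by
    rw [abs_sub_comm, ← abs_two, ← abs_div, cos_abs, abs_two]
  have hcos_pos : 0 < cos ((x - y) / 2) := by
    obtain ⟨h₁, h₂⟩ := abs_lt.1 hxy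
    exact cos_pos_of_mem_Ioo ⟨by linarith, by linarith⟩
  have hmid := hf x hx y hy
  rw [hcos, div_le_iff₀ (by positivity)] at hmid
  exact hmid.trans_eq (mul_comm _ _)

lemma midpointTrigConcaveOn_const_mul_sin_sub (I : Set ℝ) (c θ : ℝ) :
    MidpointTrigConcaveOn I (fun x => c * sin (x - θ)) := by
  intro x _ y _ _
  refine le_of_eq ?_
  rw [← mul_add, sin_add_sin]
  ring_nf

lemma exists_nonpos_mul_cos_le {a b : ℝ} {g : ℝ → ℝ} (hle : a ≤ b) (hab : b - a < π)
    (hbdd : BddBelow (g '' Icc a b)) :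
    ∃ μ ≤ 0, ∀ x ∈ Icc a b, μ * cos (x - (a + b) / 2) ≤ g x := by
  obtain ⟨m, hm⟩ := hbdd
  have hδ : 0 < cos ((b - a) / 2) := cos_pos_of_mem_Ioo ⟨by linarith [pi_pos], by linarith⟩
  set μ := min m 0 / cos ((b - a) / 2)
  have hμ : μ ≤ 0 := div_nonpos_of_nonpos_of_nonneg (min_le_right _ _) hδ.le
  refine ⟨μ, hμ, fun x hx => ?_⟩
  have hcos : cos ((b - a) / 2) ≤ cos (x - (a + b) / 2) := by
    rw [← cos_abs (x - (a + b) / 2)]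
    exact cos_le_cos_of_nonneg_of_le_pi (abs_nonneg _) (by linarith)
      (abs_le.2 ⟨by linarith [hx.1], by linarith [hx.2]⟩)
  calc μ * cos (x - (a + b) / 2) ≤ μ * cos ((b - a) / 2) := mul_le_mul_of_nonpos_left hcos hμ
    _ = min m 0 := div_mul_cancel₀ _ hδ.ne'
    _ ≤ m := min_le_left _ _
    _ ≤ g x := hm (mem_image_of_mem g hx)

namespace MidpointTrigConcaveOn

lemma mono {I J : Set ℝ} {g : ℝ → ℝ} (hg : MidpointTrigConcaveOn J g) (hIJ : I ⊆ J) :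
    MidpointTrigConcaveOn I g :=
  fun _ hx _ hy => hg (hIJ hx) (hIJ hy)

lemma add {I : Set ℝ} {g₁ g₂ : ℝ → ℝ} (h₁ : MidpointTrigConcaveOn I g₁)
    (h₂ : MidpointTrigConcaveOn I g₂) : MidpointTrigConcaveOn I (fun x => g₁ x + g₂ x) := by
  intro x hx y hy hxy
  linarith [h₁ hx hy hxy, h₂ hx hy hxy]

lemma const_mul {I : Set ℝ} {g : ℝ → ℝ} {k : ℝ} (hg : MidpointTrigConcaveOn I g) (hk : 0 ≤ k) :
    MidpointTrigConcaveOn I (fun x => k * g x) := by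
  intro x hx y hy hxy
  linarith [mul_le_mul_of_nonneg_left (hg hx hy hxy) hk]

variable {a b : ℝ} {g : ℝ → ℝ}

lemma div_mul_cos_le_midpoint {I : Set ℝ} {x y c δ μ : ℝ} (hg : MidpointTrigConcaveOn I g)
    (hx : x ∈ I) (hy : y ∈ I) (hxy : |x - y| < π) (hδ : 0 ≤ δ) (hyδ : δ ≤ cos (y - c))
    (hgy : 0 ≤ g y) (hμ : μ ≤ 0) (hgx : μ * cos (x - c) ≤ g x) :
    μ / (1 + δ) * cos ((x + y) / 2 - c) ≤ g ((x + y) / 2) := by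
  have hcos_pos : 0 < 2 * cos ((x - y) / 2) := by
    obtain ⟨h₁, h₂⟩ := abs_lt.1 hxy
    have := cos_pos_of_mem_Ioo (x := (x - y) / 2) ⟨by linarith, by linarith⟩
    positivity
  have hsum : cos (x - c) + cos (y - c) = 2 * cos ((x - y) / 2) * cos ((x + y) / 2 - c) := by
    rw [cos_add_cos]
    ring_nf
  have hweight : (1 + δ) * cos (x - c) ≤ cos (x - c) + cos (y - c) := by
    linarith [mul_le_mul_of_nonneg_left (cos_le_one (x - c)) hδ]
  refine le_of_mul_le_mul_left ?_ hcos_pos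
  calc 2 * cos ((x - y) / 2) * (μ / (1 + δ) * cos ((x + y) / 2 - c))
      = μ / (1 + δ) * (cos (x - c) + cos (y - c)) := by rw [hsum]; ring
    _ ≤ μ / (1 + δ) * ((1 + δ) * cos (x - c)) :=
        mul_le_mul_of_nonpos_left hweight (div_nonpos_of_nonpos_of_nonneg hμ (by positivity))
    _ = μ * cos (x - c) := by field_simp
    _ ≤ g x + g y := by linarith
    _ ≤ 2 * cos ((x - y) / 2) * g ((x + y) / 2) := hg hx hy hxy

lemma div_mul_cos_le {μ : ℝ} (hg : MidpointTrigConcaveOn (Icc a b) g) (hab : b - a < π)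
    (ha : 0 ≤ g a) (hb : 0 ≤ g b) (hμ : μ ≤ 0)
    (hle : ∀ x ∈ Icc a b, μ * cos (x - (a + b) / 2) ≤ g x) {x : ℝ} (hx : x ∈ Icc a b) :
    μ / (1 + cos ((b - a) / 2)) * cos (x - (a + b) / 2) ≤ g x := by
  obtain ⟨hax, hxb⟩ := hx
  have hδ : 0 ≤ cos ((b - a) / 2) := cos_nonneg_of_mem_Icc ⟨by linarith, by linarith⟩
  rcases le_total x ((a + b) / 2) with hleft | hright
  · have hreflect : 2 * x - a ∈ Icc a b := ⟨by linarith, by linarith⟩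
    have hend : cos (a - (a + b) / 2) = cos ((b - a) / 2) := by rw [← cos_neg]; ring_nf
    have hmid := hg.div_mul_cos_le_midpoint hreflect (left_mem_Icc.2 (hax.trans hxb))
      (abs_lt.2 ⟨by linarith, by linarith⟩) hδ hend.ge ha hμ (hle _ hreflect)
    rwa [show (2 * x - a + a) / 2 = x by ring] at hmid
  · have hreflect : 2 * x - b ∈ Icc a b := ⟨by linarith, by linarith⟩
    have hend : cos (b - (a + b) / 2) = cos ((b - a) / 2) := by ring_nf
    have hmid := hg.div_mul_cos_le_midpoint hreflect (right_mem_Icc.2 (hax.trans hxb))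
      (abs_lt.2 ⟨by linarith, by linarith⟩) hδ hend.ge hb hμ (hle _ hreflect)
    rwa [show (2 * x - b + b) / 2 = x by ring] at hmid

theorem nonneg_of_nonneg_endpoints (hg : MidpointTrigConcaveOn (Icc a b) g) (hab : b - a < π)
    (hbdd : BddBelow (g '' Icc a b)) (ha : 0 ≤ g a) (hb : 0 ≤ g b) {x : ℝ} (hx : x ∈ Icc a b) :
    0 ≤ g x := by
  obtain ⟨μ, hμ, hle⟩ := exists_nonpos_mul_cos_le (hx.1.trans hx.2) hab hbdd
  have hδ : 0 < cos ((b - a) / 2) :=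
    cos_pos_of_mem_Ioo ⟨by linarith [hx.1, hx.2, pi_pos], by linarith⟩
  have hiterate (k : ℕ) :
      ∀ y ∈ Icc a b, μ / (1 + cos ((b - a) / 2)) ^ k * cos (y - (a + b) / 2) ≤ g y := by
    induction k with
    | zero => simpa only [pow_zero, div_one] using hle
    | succ k ih =>
      intro y hy
      rw [pow_succ, ← div_div]
      exact hg.div_mul_cos_le hab ha hb
        (div_nonpos_of_nonpos_of_nonneg hμ (by positivity)) ih hy
  have hlim : Tendsto (fun k : ℕ => μ / (1 + cos ((b - a) / 2)) ^ k * cos (x - (a + b) / 2))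
      atTop (𝓝 0) := by
    have hpow := tendsto_pow_atTop_atTop_of_one_lt (lt_add_of_pos_right 1 hδ)
    simpa only [zero_mul] using (hpow.const_div_atTop μ).mul_const (cos (x - (a + b) / 2))
  exact le_of_tendsto' hlim fun k => hiterate k x hx

theorem sin_mul_add_sin_mul_le (hg : MidpointTrigConcaveOn (Icc a b) g) (hab : b - a < π)
    (hbdd : BddBelow (g '' Icc a b)) {x : ℝ} (hx : x ∈ Icc a b) :
    sin (b - x) * g a + sin (x - a) * g b ≤ sin (b - a) * g x := by
  have hsin : 0 ≤ sin (b - a) :=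
    sin_nonneg_of_nonneg_of_le_pi (by linarith [hx.1, hx.2]) hab.le
  have hdiff := ((hg.const_mul hsin).add
    (midpointTrigConcaveOn_const_mul_sin_sub _ (g a) b)).add
    (midpointTrigConcaveOn_const_mul_sin_sub _ (-g b) a)
  have hdiff_bdd : BddBelow ((fun y => sin (b - a) * g y + g a * sin (y - b)
      + -g b * sin (y - a)) '' Icc a b) := by
    obtain ⟨m, hm⟩ := hbdd
    have hbound (c t : ℝ) : -|c| ≤ c * sin t := by
      refine (abs_le.1 ?_).1
      rw [abs_mul]
      exact mul_le_of_le_one_right (abs_nonneg c) (abs_sin_le_one t)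
    refine ⟨sin (b - a) * m + -|g a| + -|-g b|, forall_mem_image.2 fun y hy => ?_⟩
    gcongr
    exacts [hm (mem_image_of_mem g hy), hbound _ _, hbound _ _]
  have hnonneg := hdiff.nonneg_of_nonneg_endpoints hab hdiff_bdd
    (by rw [← neg_sub b a, sin_neg, sub_self, sin_zero]; linarith)
    (by rw [sub_self, sin_zero]; linarith) hx
  rw [← neg_sub b x, sin_neg] at hnonneg
  linarith

lemma le_cos_mul_of_isMaxOn (hg : MidpointTrigConcaveOn (Icc a b) g) (hle : a ≤ b)
    (hab : b - a < π) (hbdd : BddBelow (g '' Icc a b)) (hmax : IsMaxOn g (Icc a b) a) :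
    g b ≤ cos (b - a) * g a := by
  rcases hle.eq_or_lt with rfl | hlt
  · simp only [sub_self, cos_zero, one_mul, le_refl]
  have hnear : ∀ s ∈ Ioo 0 ((b - a) / 2), cos s * g b ≤ cos (b - a - s) * g a := by
    rintro s ⟨hs₀, hs⟩
    have hx : a + 2 * s ∈ Icc a b := ⟨by linarith, by linarith⟩
    have hthree := hg.sin_mul_add_sin_mul_le hab hbdd hx
    have hmax_x := mul_le_mul_of_nonneg_left (isMaxOn_iff.1 hmax _ hx)
      (sin_nonneg_of_nonneg_of_le_pi (x := b - a) (by linarith) hab.le)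
    have hsin : 0 < sin s := sin_pos_of_pos_of_lt_pi hs₀ (by linarith)
    have hdiff : sin (b - a) - sin (b - (a + 2 * s)) = 2 * sin s * cos (b - a - s) := by
      rw [sin_sub_sin]
      ring_nf
    rw [add_sub_cancel_left, sin_two_mul] at hthree
    refine le_of_mul_le_mul_left ?_ (mul_pos two_pos hsin)
    calc 2 * sin s * (cos s * g b) ≤ (sin (b - a) - sin (b - (a + 2 * s))) * g a := by linarith
      _ = 2 * sin s * (cos (b - a - s) * g a) := by rw [hdiff]; ring
  have hlim_left : Tendsto (fun s => cos s * g b) (𝓝[>] 0) (𝓝 (g b)) :=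
    tendsto_nhdsWithin_of_tendsto_nhds <|
      Continuous.tendsto' (by fun_prop) _ _ (by rw [cos_zero, one_mul])
  have hlim_right : Tendsto (fun s => cos (b - a - s) * g a) (𝓝[>] 0)
      (𝓝 (cos (b - a) * g a)) :=
    tendsto_nhdsWithin_of_tendsto_nhds <|
      Continuous.tendsto' (by fun_prop) _ _ (by rw [sub_zero])
  exact le_of_tendsto_of_tendsto hlim_left hlim_right <|
    mem_of_superset (Ioo_mem_nhdsGT (by linarith)) hnear

theorem cos_mul_le_cos_mul_of_isMaxOn (hg : MidpointTrigConcaveOn (Icc a b) g)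
    (hab : b - a ≤ π / 2) (hbdd : BddBelow (g '' Icc a b)) (hmax : IsMaxOn g (Icc a b) a)
    {x : ℝ} (hx : x ∈ Icc a b) : cos (x - a) * g b ≤ cos (b - a) * g x := by
  obtain ⟨hax, hxb⟩ := hx
  rcases (hax.trans hxb).eq_or_lt with rfl | hlt
  · rw [le_antisymm hxb hax]
  have hπ : b - a < π := by linarith [pi_pos]
  have hend := hg.le_cos_mul_of_isMaxOn hlt.le hπ hbdd hmax
  have hthree := hg.sin_mul_add_sin_mul_le hπ hbdd ⟨hax, hxb⟩
  have hcos : 0 ≤ cos (b - a) := cos_nonneg_of_mem_Icc ⟨by linarith, hab⟩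
  have hsin : 0 ≤ sin (b - x) := sin_nonneg_of_nonneg_of_le_pi (by linarith) (by linarith)
  have hsplit : sin (b - x) + cos (b - a) * sin (x - a) = sin (b - a) * cos (x - a) := by
    rw [show b - x = (b - a) - (x - a) by ring, sin_sub (b - a)]
    ring
  refine le_of_mul_le_mul_left ?_ (sin_pos_of_pos_of_lt_pi (sub_pos.2 hlt) hπ)
  calc sin (b - a) * (cos (x - a) * g b)
      = sin (b - x) * g b + cos (b - a) * (sin (x - a) * g b) := by
        linear_combination (-g b) * hsplit
    _ ≤ sin (b - x) * (cos (b - a) * g a) + cos (b - a) * (sin (x - a) * g b) := by gcongr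
    _ = cos (b - a) * (sin (b - x) * g a + sin (x - a) * g b) := by ring
    _ ≤ cos (b - a) * (sin (b - a) * g x) := by gcongr
    _ = sin (b - a) * (cos (b - a) * g x) := by ring

theorem sub_le_pi_div_two_of_isMaxOn (hg : MidpointTrigConcaveOn (Icc a b) g)
    (hg_nonneg : ∀ x ∈ Icc a b, 0 ≤ g x) (hmax : IsMaxOn g (Icc a b) a) (ha : 0 < g a) :
    b - a ≤ π / 2 := by
  by_contra! hlong
  obtain ⟨s, hs, hs_lt⟩ := exists_between (lt_min hlong (half_lt_self pi_pos))
  obtain ⟨hsb, hsπ⟩ := lt_min_iff.1 hs_lt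
  have hsub : Icc a (a + s) ⊆ Icc a b := Icc_subset_Icc_right (by linarith)
  have hs_mem : a + s ∈ Icc a b := ⟨by linarith [pi_pos], by linarith⟩
  have hbound := (hg.mono hsub).le_cos_mul_of_isMaxOn hs_mem.1 (by linarith)
    ⟨0, forall_mem_image.2 fun x hx => hg_nonneg x (hsub hx)⟩ (hmax.on_subset hsub)
  rw [add_sub_cancel_left] at hbound
  have hcos : cos s < 0 := cos_neg_of_pi_div_two_lt_of_lt hs (by linarith)
  linarith [hg_nonneg _ hs_mem, mul_neg_of_neg_of_pos hcos ha]

end MidpointTrigConcaveOn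

namespace SinConcaveOn

variable {N a b : ℝ} {f : ℝ → ℝ}

theorem sub_le_pi_div_two_of_isMaxOn (hf : SinConcaveOn N f (Icc a b)) (hN : 0 < N)
    (hf_nonneg : ∀ x ∈ Icc a b, 0 ≤ f x) (hmax : IsMaxOn f (Icc a b) a) (ha : 0 < f a) :
    b - a ≤ π / 2 :=
  hf.midpointTrigConcaveOn_rpow.sub_le_pi_div_two_of_isMaxOn
    (fun x hx => rpow_nonneg (hf_nonneg x hx) _)
    (isMaxOn_rpow (one_div_nonneg.2 hN.le) hf_nonneg hmax) (rpow_pos_of_pos ha _)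

theorem cos_rpow_mul_le_cos_rpow_mul (hf : SinConcaveOn N f (Icc a b)) (hN : 0 < N)
    (hab : b - a ≤ π / 2) (hf_nonneg : ∀ x ∈ Icc a b, 0 ≤ f x) (hmax : IsMaxOn f (Icc a b) a)
    {x y : ℝ} (hx : x ∈ Icc a b) (hy : y ∈ Icc a b) (hxy : x ≤ y) :
    cos (x - a) ^ N * f y ≤ cos (y - a) ^ N * f x := by
  have hcos (t : ℝ) (ht : t ∈ Icc a b) : 0 ≤ cos (t - a) :=
    cos_nonneg_of_mem_Icc ⟨by linarith [ht.1, pi_pos], by linarith [ht.2]⟩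
  have hroot_nonneg (t : ℝ) (ht : t ∈ Icc a b) : 0 ≤ f t ^ (1 / N) :=
    rpow_nonneg (hf_nonneg t ht) _
  have hpow (s t : ℝ) (hs : s ∈ Icc a b) (ht : t ∈ Icc a b) :
      (cos (s - a) * f t ^ (1 / N)) ^ N = cos (s - a) ^ N * f t := by
    rw [mul_rpow (hcos s hs) (hroot_nonneg t ht), one_div,
      rpow_inv_rpow (hf_nonneg t ht) hN.ne']
  have hsub : Icc a y ⊆ Icc a b := Icc_subset_Icc_right hy.2
  have hroot : cos (x - a) * f y ^ (1 / N) ≤ cos (y - a) * f x ^ (1 / N) :=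
    (hf.midpointTrigConcaveOn_rpow.mono hsub).cos_mul_le_cos_mul_of_isMaxOn (by linarith [hy.2])
      ⟨0, forall_mem_image.2 fun t ht => hroot_nonneg t (hsub ht)⟩
      ((isMaxOn_rpow (one_div_nonneg.2 hN.le) hf_nonneg hmax).on_subset hsub) ⟨hx.1, hxy⟩
  rw [← hpow x y hx hy, ← hpow y x hy hx]
  exact rpow_le_rpow (mul_nonneg (hcos x hx) (hroot_nonneg y hy)) hroot hN.le

end SinConcaveOn

theorem stmt_0_general {N ε τ C : ℝ} {f : ℝ → ℝ} (hN : 0 < N) (hε : 0 < ε) (hεπ : ε < π / 2)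
    (hετ : ε < τ) (hf_nonneg : ∀ x ∈ Icc 0 τ, 0 ≤ f x) (hconc : SinConcaveOn N f (Icc 0 τ))
    (hmax : ∀ x ∈ Icc 0 τ, f x ≤ f 0) (hC : 0 < C) (hCε : f ε = C * cos ε ^ N) :
    τ ≤ π / 2 ∧ (∀ x ∈ Icc 0 ε, C * cos x ^ N ≤ f x) ∧ ∀ x ∈ Icc ε τ, f x ≤ C * cos x ^ N := by
  have hcosε : 0 < cos ε ^ N :=
    rpow_pos_of_pos (cos_pos_of_mem_Ioo ⟨by linarith [pi_pos], hεπ⟩) N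
  have hmaxOn : IsMaxOn f (Icc 0 τ) 0 := isMaxOn_iff.2 hmax
  have hε_mem : ε ∈ Icc 0 τ := ⟨hε.le, hετ.le⟩
  have hf_zero : 0 < f 0 := (mul_pos hC hcosε).trans_le (hCε.ge.trans (hmax ε hε_mem))
  have hτ : τ - 0 ≤ π / 2 := hconc.sub_le_pi_div_two_of_isMaxOn hN hf_nonneg hmaxOn hf_zero
  have hcross {x y : ℝ} (hx : x ∈ Icc 0 τ) (hy : y ∈ Icc 0 τ) (hxy : x ≤ y) :
      cos x ^ N * f y ≤ cos y ^ N * f x := by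
    simpa only [sub_zero] using
      hconc.cos_rpow_mul_le_cos_rpow_mul hN hτ hf_nonneg hmaxOn hx hy hxy
  refine ⟨by rwa [sub_zero] at hτ, fun x hx => le_of_mul_le_mul_left ?_ hcosε,
    fun x hx => le_of_mul_le_mul_left ?_ hcosε⟩
  · have hx_cross := hcross ⟨hx.1, hx.2.trans hετ.le⟩ hε_mem hx.2
    rw [hCε] at hx_cross
    linarith
  · have hx_cross := hcross hε_mem ⟨hε.le.trans hx.1, hx.2⟩ hx.1
    rw [hCε] at hx_cross
    linarith

theorem stmt_0 (n : ℕ) (hn : 1 ≤ n) (ε τ : ℝ) (hε : 0 < ε) (hεπ : ε < π / 2)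
    (hτε : ε < τ) (hτπ : τ ≤ π)
    (f : ℝ → ℝ) (hf0 : ∀ x ∈ Icc (0 : ℝ) τ, 0 ≤ f x)
    (hfne : ∃ x ∈ Icc (0 : ℝ) τ, f x ≠ 0)
    (hconc : SinConcaveOn n f (Icc 0 τ))
    (hmax : ∀ x ∈ Icc (0 : ℝ) τ, f x ≤ f 0)
    (C : ℝ) (hC : 0 < C) (hCε : f ε = C * Real.cos ε ^ n)
    (h : ℝ → ℝ) (hdef : ∀ t, h t = C * Real.cos t ^ n) :
    τ ≤ π / 2 ∧ (∀ x ∈ Icc 0 ε, h x ≤ f x) ∧ ∀ x ∈ Icc ε τ, f x ≤ h x := by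
  simp only [hdef]
  simpa only [rpow_natCast] using stmt_0_general (Nat.cast_pos.2 hn) hε hεπ hτε hf0 hconc hmax hC
    (by rw [hCε, rpow_natCast])
end

section
/- Let m and n be positive integers and let I ⊆ ℝ be an interval with length(I) ≤ π. If f is a nonnegative sin^m-concave function on I and g is a nonnegative sin^n-concave function on I, then the product f·g is sin^{m+n}-concave on I. -/
open Real Set

/-! For exponents `1 / M`, `1 / N`, `1 / (M + N)` Hölder's inequality reads
`(∑ (f g)^{1/(M+N)})^{M+N} ≤ (∑ f^{1/M})^M (∑ g^{1/N})^N`. Where `c = 2 cos(|x₂ - x₁| / 2)` is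
positive, `sin^N`-concavity at `x₁, x₂` says `(f(x₁)^{1/N} + f(x₂)^{1/N})^N ≤ c^N f((x₁ + x₂)/2)`,
so the inequalities for `f` and `g` multiply, because `c^M c^N = c^{M+N}`. If `c ≤ 0`, the left-hand
side of the defining inequality is nonpositive (`x / 0 = 0`). -/

theorem div_le_rpow_one_div_iff {N x y c : ℝ} (hN : 0 < N) (hx : 0 ≤ x) (hy : 0 ≤ y)
    (hc : 0 < c) : x / c ≤ y ^ (1 / N) ↔ x ^ N ≤ c ^ N * y := by
  rw [one_div, Real.le_rpow_inv_iff_of_pos (div_nonneg hx hc.le) hy hN,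
    Real.div_rpow hx hc.le, div_le_iff₀' (Real.rpow_pos_of_pos hc N)]

section HolderSums

variable {ι : Type*} (s : Finset ι) {f g : ι → ℝ} {M N : ℝ}

theorem sum_rpow_nonneg (hf : ∀ i ∈ s, 0 ≤ f i) (p : ℝ) : 0 ≤ ∑ i ∈ s, f i ^ p :=
  Finset.sum_nonneg fun i hi => Real.rpow_nonneg (hf i hi) p

theorem rpow_sum_mul_rpow_one_div_le (hM : 0 < M) (hN : 0 < N)
    (hf : ∀ i ∈ s, 0 ≤ f i) (hg : ∀ i ∈ s, 0 ≤ g i) :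
    (∑ i ∈ s, (f i * g i) ^ (1 / (M + N))) ^ (M + N) ≤
      (∑ i ∈ s, f i ^ (1 / M)) ^ M * (∑ i ∈ s, g i ^ (1 / N)) ^ N := by
  have hMN : 0 < M + N := add_pos hM hN
  have hholder : (1 / M).HolderTriple (1 / N) (1 / (M + N)) :=
    ⟨by simp only [one_div, inv_inv], one_div_pos.2 hM, one_div_pos.2 hN⟩
  have hF : 0 ≤ ∑ i ∈ s, f i ^ (1 / M) := sum_rpow_nonneg s hf _
  have hG : 0 ≤ ∑ i ∈ s, g i ^ (1 / N) := sum_rpow_nonneg s hg _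
  have hFG : 0 ≤ ∑ i ∈ s, (f i * g i) ^ (1 / (M + N)) :=
    sum_rpow_nonneg s (fun i hi => mul_nonneg (hf i hi) (hg i hi)) _
  calc (∑ i ∈ s, (f i * g i) ^ (1 / (M + N))) ^ (M + N)
      ≤ ((∑ i ∈ s, f i ^ (1 / M)) ^ ((1 / (M + N)) / (1 / M)) *
          (∑ i ∈ s, g i ^ (1 / N)) ^ ((1 / (M + N)) / (1 / N))) ^ (M + N) :=
        Real.rpow_le_rpow hFG (Real.Lr_rpow_le_Lp_mul_Lq_of_nonneg s hholder hf hg) hMN.le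
    _ = (∑ i ∈ s, f i ^ (1 / M)) ^ M * (∑ i ∈ s, g i ^ (1 / N)) ^ N := by
        rw [Real.mul_rpow (Real.rpow_nonneg hF _) (Real.rpow_nonneg hG _),
          ← Real.rpow_mul hF, ← Real.rpow_mul hG]
        congr 2 <;> field_simp

theorem sum_mul_rpow_one_div_div_le {a b c : ℝ} (hM : 0 < M) (hN : 0 < N)
    (hf : ∀ i ∈ s, 0 ≤ f i) (hg : ∀ i ∈ s, 0 ≤ g i)
    (ha : 0 ≤ a) (hb : 0 ≤ b) (hfa : (∑ i ∈ s, f i ^ (1 / M)) / c ≤ a ^ (1 / M))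
    (hgb : (∑ i ∈ s, g i ^ (1 / N)) / c ≤ b ^ (1 / N)) :
    (∑ i ∈ s, (f i * g i) ^ (1 / (M + N))) / c ≤ (a * b) ^ (1 / (M + N)) := by
  have hab : 0 ≤ a * b := mul_nonneg ha hb
  have hF : 0 ≤ ∑ i ∈ s, f i ^ (1 / M) := sum_rpow_nonneg s hf _
  have hG : 0 ≤ ∑ i ∈ s, g i ^ (1 / N) := sum_rpow_nonneg s hg _
  have hFG : 0 ≤ ∑ i ∈ s, (f i * g i) ^ (1 / (M + N)) :=
    sum_rpow_nonneg s (fun i hi => mul_nonneg (hf i hi) (hg i hi)) _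
  rcases le_or_gt c 0 with hc | hc
  · exact (div_nonpos_of_nonneg_of_nonpos hFG hc).trans (Real.rpow_nonneg hab _)
  rw [div_le_rpow_one_div_iff hM hF ha hc] at hfa
  rw [div_le_rpow_one_div_iff hN hG hb hc] at hgb
  rw [div_le_rpow_one_div_iff (add_pos hM hN) hFG hab hc]
  calc (∑ i ∈ s, (f i * g i) ^ (1 / (M + N))) ^ (M + N)
      ≤ (∑ i ∈ s, f i ^ (1 / M)) ^ M * (∑ i ∈ s, g i ^ (1 / N)) ^ N :=
        rpow_sum_mul_rpow_one_div_le s hM hN hf hg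
    _ ≤ (c ^ M * a) * (c ^ N * b) := by gcongr
    _ = c ^ (M + N) * (a * b) := by rw [Real.rpow_add hc]; ring

end HolderSums

theorem stmt_3_general {M N : ℝ} (hM : 0 < M) (hN : 0 < N) {I : Set ℝ} (hI : I.OrdConnected)
    {f g : ℝ → ℝ} (hf0 : ∀ x ∈ I, 0 ≤ f x) (hg0 : ∀ x ∈ I, 0 ≤ g x)
    (hf : SinConcaveOn M f I) (hg : SinConcaveOn N g I) :
    SinConcaveOn (M + N) (fun x => f x * g x) I := by
  intro x₁ hx₁ x₂ hx₂
  have hmid : (x₁ + x₂) / 2 ∈ I := by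
    simpa [midpoint_eq_smul_add, div_eq_inv_mul] using (hI.convex : Convex ℝ I).midpoint_mem hx₁ hx₂
  have hmem : ∀ i ∈ Finset.univ, ![x₁, x₂] i ∈ I := by
    simp [Fin.forall_fin_two, hx₁, hx₂]
  simpa [Fin.sum_univ_two] using
    sum_mul_rpow_one_div_div_le Finset.univ hM hN
      (fun i hi => hf0 _ (hmem i hi)) (fun i hi => hg0 _ (hmem i hi)) (hf0 _ hmid) (hg0 _ hmid)
      (by simpa [Fin.sum_univ_two] using hf x₁ hx₁ x₂ hx₂)
      (by simpa [Fin.sum_univ_two] using hg x₁ hx₁ x₂ hx₂)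

theorem stmt_3 (m n : ℕ) (hm : 0 < m) (hn : 0 < n)
    (I : Set ℝ) (hI : I.OrdConnected) (hIπ : Metric.diam I ≤ π)
    (f g : ℝ → ℝ) (hf0 : ∀ x ∈ I, 0 ≤ f x) (hg0 : ∀ x ∈ I, 0 ≤ g x)
    (hf : SinConcaveOn m f I) (hg : SinConcaveOn n g I) :
    SinConcaveOn (m + n) (fun x => f x * g x) I :=
  stmt_3_general (Nat.cast_pos.2 hm) (Nat.cast_pos.2 hn) hI hf0 hg0 hf hg
end

section
/- Let N ≥ 1 be a real number, let I ⊆ ℝ be a closed interval with length(I) ≤ π, and let ν be a probability measure on I whose density with respect to Lebesgue measure is a continuous sin^N-concave function. Let ν₁ be the probability measure on I₁ = [−π/2, π/2] with density C₁·cos(t)^N, where C₁ > 0 is the normalizing constant. Then for all κ1, κ2 ∈ [0,1] with κ1 ≤ 1/2 and κ2 ≥ 1/2: Sep((I, ν), κ1, κ2) ≤ Sep((I₁, ν₁), κ1, κ2). -/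
open Real Set MeasureTheory

/-- The separation distance `Sep((I,ν),κ1,κ2)`: the supremum of those `δ ≥ 0` for which
there exist measurable subsets `A1, A2 ⊆ I` with `ν(Ai) ≥ κi` and `dist(A1,A2) ≥ δ`. -/
noncomputable def sep (ν : Measure ℝ) (I : Set ℝ) (κ1 κ2 : ℝ) : ℝ :=
  sSup {δ : ℝ | 0 ≤ δ ∧ ∃ A1 A2 : Set ℝ, MeasurableSet A1 ∧ MeasurableSet A2 ∧
    A1 ⊆ I ∧ A2 ⊆ I ∧ ENNReal.ofReal κ1 ≤ ν A1 ∧ ENNReal.ofReal κ2 ≤ ν A2 ∧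
    ∀ a1 ∈ A1, ∀ a2 ∈ A2, δ ≤ |a1 - a2|}

/-!
Separation distances can only decrease under the push-forward by a `1`-Lipschitz map, so it suffices
to find such a map `T` carrying the model measure `ν₁` to `ν`. In dimension one there is only one
increasing candidate, the map with `ν₁ (-π/2, v) = ν (a, T v)`; its derivative is
`C₁ cos v ^ N / f (T v)`, and the claim becomes `C₁ cos v ^ N ≤ f x` for `x = T v`.

Since `f ^ (1/N)` is a supersolution of `h'' + h = 0`, it lies below a sinusoid that touches it
at `x`, so that `f t ≤ B cos (t - x + u) ^ N` with equality at `t = x`. Hence the masses of `ν` on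
the two sides of `x` are at most `B` times the masses of `cos ^ N` on the two sides of `u`. By
log-concavity of `cos ^ N`, the left mass-to-density ratio increases and the right one decreases;
comparing the left masses if `u ≤ v`, and the right ones if `v ≤ u`, gives the claim.
-/

open scoped Topology

section Separation

variable {μ ν : Measure ℝ} {I J : Set ℝ} {κ1 κ2 : ℝ}

/-- The separations admissible for `(I, ν)` at masses `κ1, κ2`; by definition `sep ν I κ1 κ2` is
the supremum of this set. -/
def separations (ν : Measure ℝ) (I : Set ℝ) (κ1 κ2 : ℝ) : Set ℝ :=
  {δ : ℝ | 0 ≤ δ ∧ ∃ A1 A2 : Set ℝ, MeasurableSet A1 ∧ MeasurableSet A2 ∧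
    A1 ⊆ I ∧ A2 ⊆ I ∧ ENNReal.ofReal κ1 ≤ ν A1 ∧ ENNReal.ofReal κ2 ≤ ν A2 ∧
    ∀ a1 ∈ A1, ∀ a2 ∈ A2, δ ≤ |a1 - a2|}

lemma separations_subset_Ici : separations ν I κ1 κ2 ⊆ Ici 0 := fun _ hδ => hδ.1

lemma separations_swap_subset : separations ν I κ1 κ2 ⊆ separations ν I κ2 κ1 := by
  rintro δ ⟨hδ, A1, A2, hA1, hA2, hA1I, hA2I, hκ1, hκ2, hdist⟩
  exact ⟨hδ, A2, A1, hA2, hA1, hA2I, hA1I, hκ2, hκ1,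
    fun x hx y hy => abs_sub_comm y x ▸ hdist y hy x hx⟩

lemma bddAbove_separations (hI : Bornology.IsBounded I) (hκ1 : 0 < κ1) (hκ2 : 0 < κ2) :
    BddAbove (separations ν I κ1 κ2) := by
  refine ⟨Metric.diam I, ?_⟩
  rintro δ ⟨-, A1, A2, -, -, hA1I, hA2I, hνA1, hνA2, hdist⟩
  obtain ⟨x, hx⟩ := nonempty_of_measure_ne_zero ((ENNReal.ofReal_pos.2 hκ1).trans_le hνA1).ne'
  obtain ⟨y, hy⟩ := nonempty_of_measure_ne_zero ((ENNReal.ofReal_pos.2 hκ2).trans_le hνA2).ne'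
  exact (hdist x hx y hy).trans (Metric.dist_le_diam_of_mem hI (hA1I hx) (hA2I hy))

lemma sep_nonneg : 0 ≤ sep ν I κ1 κ2 := Real.sSup_nonneg separations_subset_Ici

lemma sep_comm : sep ν I κ1 κ2 = sep ν I κ2 κ1 :=
  congrArg sSup (separations_swap_subset.antisymm separations_swap_subset)

/-- A junk value: `A1 = ∅` is admissible at mass `0`, so the set of separations is either empty
or unbounded, and `sSup` is `0` in both cases. -/
lemma sep_zero_left : sep ν I 0 κ2 = 0 := by
  change sSup (separations ν I 0 κ2) = 0
  rcases (separations ν I 0 κ2).eq_empty_or_nonempty with hempty | ⟨δ, hδ⟩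
  · rw [hempty, Real.sSup_empty]
  · refine Real.sSup_of_not_bddAbove fun ⟨M, hM⟩ => ?_
    obtain ⟨-, -, A2, -, hA2, -, hA2I, -, hνA2, -⟩ := hδ
    have hmem : |M| + 1 ∈ separations ν I 0 κ2 :=
      ⟨by positivity, ∅, A2, .empty, hA2, empty_subset I, hA2I, by simp, hνA2, by simp⟩
    linarith [hM hmem, le_abs_self M]

lemma separations_map_subset {T : ℝ → ℝ} (hT : LipschitzWith 1 T) (hJ : MeasurableSet J)
    (hμJ : μ Jᶜ = 0) : separations (μ.map T) I κ1 κ2 ⊆ separations μ J κ1 κ2 := by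
  have hTm : Measurable T := hT.continuous.measurable
  have hmass : ∀ A, MeasurableSet A → μ (T ⁻¹' A ∩ J) = μ.map T A := fun A hA => by
    rw [measure_inter_conull hμJ, Measure.map_apply hTm hA]
  rintro δ ⟨hδ, A1, A2, hA1, hA2, -, -, hκ1, hκ2, hdist⟩
  refine ⟨hδ, T ⁻¹' A1 ∩ J, T ⁻¹' A2 ∩ J, (hTm hA1).inter hJ, (hTm hA2).inter hJ,
    inter_subset_right, inter_subset_right, (hmass A1 hA1).symm ▸ hκ1, (hmass A2 hA2).symm ▸ hκ2,
    fun x hx y hy => (hdist _ hx.1 _ hy.1).trans ?_⟩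
  simpa [Real.dist_eq] using hT.dist_le_mul x y

theorem sep_map_le_of_lipschitzWith {T : ℝ → ℝ} (hT : LipschitzWith 1 T) (hJ : MeasurableSet J)
    (hJb : Bornology.IsBounded J) (hμJ : μ Jᶜ = 0) (hκ1 : 0 ≤ κ1) (hκ2 : 0 ≤ κ2) :
    sep (μ.map T) I κ1 κ2 ≤ sep μ J κ1 κ2 := by
  rcases hκ1.eq_or_lt with rfl | hκ1
  · exact sep_zero_left.trans_le sep_nonneg
  rcases hκ2.eq_or_lt with rfl | hκ2
  · exact (sep_comm.trans sep_zero_left).trans_le sep_nonneg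
  exact Real.sSup_le (fun δ hδ => le_csSup (bddAbove_separations hJb hκ1 hκ2)
    (separations_map_subset hT hJ hμJ hδ)) sep_nonneg

end Separation

section Transport

lemma hasDerivAt_invFunOn {F : ℝ → ℝ} {s : Set ℝ} {x F' : ℝ} (hF : StrictMonoOn F s)
    (hs : s ∈ 𝓝 x) (hFs : F '' s ∈ 𝓝 (F x)) (hd : HasDerivAt F F' x) (hF' : F' ≠ 0) :
    HasDerivAt (Function.invFunOn F s) F'⁻¹ (F x) := by
  set R := Function.invFunOn F s
  have hinv : LeftInvOn R F s := hF.injOn.leftInvOn_invFunOn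
  have hRx : R (F x) = x := hinv (mem_of_mem_nhds hs)
  have hmono : StrictMonoOn R (F '' s) := by
    rintro _ ⟨p, hp, rfl⟩ _ ⟨q, hq, rfl⟩ hpq
    rw [hinv hp, hinv hq]
    exact (hF.lt_iff_lt hp hq).1 hpq
  have hcont : ContinuousAt R (F x) := by
    refine hmono.continuousAt_of_image_mem_nhds hFs ?_
    rwa [hinv.image_image, hRx]
  refine HasDerivAt.of_local_left_inverse hcont (hRx.symm ▸ hd) hF' ?_
  filter_upwards [hFs] with y hy using Function.invFunOn_eq hy

lemma strictMonoOn_Icc_of_hasDerivAt_pos {F f : ℝ → ℝ} {a b : ℝ} (hF : ContinuousOn F (Icc a b))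
    (hF' : ∀ x ∈ Ioo a b, HasDerivAt F (f x) x) (hf : ∀ x ∈ Ioo a b, 0 < f x) :
    StrictMonoOn F (Icc a b) :=
  strictMonoOn_of_deriv_pos (convex_Icc a b) hF fun x hx => by
    rw [interior_Icc] at hx
    exact (hF' x hx).deriv ▸ hf x hx

lemma exists_bijOn_hasDerivAt_div {F G f g : ℝ → ℝ} {a b c d : ℝ} (hab : a ≤ b) (hcd : c ≤ d)
    (hF : ContinuousOn F (Icc a b)) (hG : ContinuousOn G (Icc c d))
    (hF' : ∀ x ∈ Ioo a b, HasDerivAt F (f x) x) (hG' : ∀ v ∈ Ioo c d, HasDerivAt G (g v) v)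
    (hf : ∀ x ∈ Ioo a b, 0 < f x) (hg : ∀ v ∈ Ioo c d, 0 < g v)
    (hleft : F a = G c) (hright : F b = G d) :
    ∃ T : ℝ → ℝ, BijOn T (Ioo c d) (Ioo a b) ∧
      ∀ v ∈ Ioo c d, F (T v) = G v ∧ HasDerivAt T (g v / f (T v)) v := by
  have hFmono := strictMonoOn_Icc_of_hasDerivAt_pos hF hF' hf
  have hGmono := strictMonoOn_Icc_of_hasDerivAt_pos hG hG' hg
  have hFim : F '' Ioo a b = Ioo (F a) (F b) := hF.image_Ioo_of_strictMonoOn hab hFmono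
  have hGim : G '' Ioo c d = F '' Ioo a b := by
    rw [hFim, hG.image_Ioo_of_strictMonoOn hcd hGmono, hleft, hright]
  replace hFmono := hFmono.mono Ioo_subset_Icc_self
  set R := Function.invFunOn F (Ioo a b)
  have hGbij : BijOn G (Ioo c d) (F '' Ioo a b) :=
    hGim ▸ (hGmono.mono Ioo_subset_Icc_self).injOn.bijOn_image
  have hRbij : BijOn R (F '' Ioo a b) (Ioo a b) :=
    hFmono.injOn.bijOn_image.symm hFmono.injOn.bijOn_image.invOn_invFunOn.symm
  refine ⟨R ∘ G, hRbij.comp hGbij, fun v hv => ?_⟩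
  have hFR : F (R (G v)) = G v := Function.invFunOn_eq (hGbij.mapsTo hv)
  have hx : R (G v) ∈ Ioo a b := hRbij.mapsTo (hGbij.mapsTo hv)
  have hR' : HasDerivAt R (f (R (G v)))⁻¹ (G v) := by
    have := hasDerivAt_invFunOn hFmono (isOpen_Ioo.mem_nhds hx)
      (hFim ▸ isOpen_Ioo.mem_nhds (hFim ▸ mem_image_of_mem F hx)) (hF' _ hx) (hf _ hx).ne'
    rwa [hFR] at this
  exact ⟨hFR, by simpa only [div_eq_inv_mul, Function.comp_apply] using! hR'.comp v (hG' v hv)⟩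

lemma map_restrict_withDensity_eq_of_bijOn {s t : Set ℝ} {T T' : ℝ → ℝ} {f g : ℝ → ENNReal}
    (hs : MeasurableSet s) (hTm : Measurable T) (hT : BijOn T s t)
    (hT' : ∀ v ∈ s, HasDerivWithinAt T (T' v) s v)
    (hfg : ∀ v ∈ s, g v = ENNReal.ofReal |T' v| * f (T v)) :
    ((volume.restrict s).withDensity g).map T = (volume.restrict t).withDensity f := by
  ext A hA
  have himage : T '' (T ⁻¹' A ∩ s) = A ∩ t := by
    rw [inter_comm, image_inter_preimage, hT.image_eq, inter_comm]
  rw [Measure.map_apply hTm hA, withDensity_apply _ (hTm hA), withDensity_apply _ hA,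
    Measure.restrict_restrict (hTm hA), Measure.restrict_restrict hA, ← himage,
    lintegral_image_eq_lintegral_abs_deriv_mul ((hTm hA).inter hs)
      (fun v hv => (hT' v hv.2).mono inter_subset_right) (hT.injOn.mono inter_subset_right)]
  exact setLIntegral_congr_fun ((hTm hA).inter hs) fun v hv => hfg v hv.2

lemma continuousOn_integral_Icc {f : ℝ → ℝ} {a b : ℝ} (hab : a ≤ b)
    (hf : ContinuousOn f (Icc a b)) : ContinuousOn (fun x => ∫ t in a..x, f t) (Icc a b) := by
  rw [← uIcc_of_le hab] at hf ⊢
  exact intervalIntegral.continuousOn_primitive_interval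
    (hf.integrableOn_compact isCompact_uIcc)

lemma hasDerivAt_integral_of_continuousOn_Icc {f : ℝ → ℝ} {a b x : ℝ}
    (hf : ContinuousOn f (Icc a b)) (hx : x ∈ Ioo a b) :
    HasDerivAt (fun y => ∫ t in a..y, f t) (f x) x := by
  have hfx : ContinuousOn f (uIcc a x) :=
    hf.mono (uIcc_of_le hx.1.le ▸ Icc_subset_Icc_right hx.2.le)
  have hfo : ContinuousOn f (Ioo a b) := hf.mono Ioo_subset_Icc_self
  exact intervalIntegral.integral_hasDerivAt_right hfx.intervalIntegrable
    (hfo.stronglyMeasurableAtFilter isOpen_Ioo x hx) (hfo.continuousAt (isOpen_Ioo.mem_nhds hx))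

/-- The map `T` matches the masses to the left of `v` and `T v`, so that `T' = g / f ∘ T`. -/
theorem exists_lipschitzWith_map_withDensity {f g : ℝ → ℝ} {a b c d : ℝ} (hab : a ≤ b)
    (hcd : c ≤ d) (hf : ContinuousOn f (Icc a b)) (hg : ContinuousOn g (Icc c d))
    (hf0 : ∀ x ∈ Ioo a b, 0 < f x) (hg0 : ∀ v ∈ Ioo c d, 0 < g v)
    (hmass : ∫ t in a..b, f t = ∫ t in c..d, g t)
    (hle : ∀ x ∈ Ioo a b, ∀ v ∈ Ioo c d,
      ∫ t in a..x, f t = ∫ t in c..v, g t → g v ≤ f x) :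
    ∃ T : ℝ → ℝ, LipschitzWith 1 T ∧
      ((volume.restrict (Icc c d)).withDensity (fun t => ENNReal.ofReal (g t))).map T =
        (volume.restrict (Icc a b)).withDensity (fun t => ENNReal.ofReal (f t)) := by
  obtain ⟨T₀, hbij, hT₀⟩ := exists_bijOn_hasDerivAt_div hab hcd
    (continuousOn_integral_Icc hab hf) (continuousOn_integral_Icc hcd hg)
    (fun x hx => hasDerivAt_integral_of_continuousOn_Icc hf hx)
    (fun v hv => hasDerivAt_integral_of_continuousOn_Icc hg hv) hf0 hg0 (by simp) hmass
  have hfT₀ : ∀ v ∈ Ioo c d, 0 < f (T₀ v) := fun v hv => hf0 _ (hbij.mapsTo hv)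
  have hT₀' : ∀ v ∈ Ioo c d, HasDerivWithinAt T₀ (g v / f (T₀ v)) (Ioo c d) v :=
    fun v hv => (hT₀ v hv).2.hasDerivWithinAt
  have hLip : LipschitzOnWith 1 T₀ (Ioo c d) := by
    refine (convex_Ioo c d).lipschitzOnWith_of_nnnorm_hasDerivWithin_le hT₀' fun v hv => ?_
    rw [← NNReal.coe_le_coe, coe_nnnorm, NNReal.coe_one,
      Real.norm_of_nonneg (div_pos (hg0 v hv) (hfT₀ v hv)).le, div_le_one (hfT₀ v hv)]
    exact hle _ (hbij.mapsTo hv) v hv (hT₀ v hv).1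
  obtain ⟨T, hT, hEq⟩ := hLip.extend_real
  refine ⟨T, hT, ?_⟩
  rw [← restrict_Ioo_eq_restrict_Icc, ← restrict_Ioo_eq_restrict_Icc]
  refine map_restrict_withDensity_eq_of_bijOn measurableSet_Ioo
    hT.continuous.measurable (hbij.congr hEq)
    (fun v hv => (hT₀' v hv).congr hEq.symm (hEq.symm hv)) fun v hv => ?_
  rw [← hEq hv, abs_of_pos (div_pos (hg0 v hv) (hfT₀ v hv)),
    ← ENNReal.ofReal_mul (div_pos (hg0 v hv) (hfT₀ v hv)).le, div_mul_cancel₀ _ (hfT₀ v hv).ne']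

end Transport

section SinMidconcave

/-- The midpoint form of `h'' + h ≤ 0` on `s`: the function `h` dominates at midpoints the
sinusoid through its values at two points less than `π` apart. A nonnegative `f` is
`sin^N`-concave when `f ^ (1 / N)` has this property; no sign is imposed on `h` here, so that
sinusoids may be subtracted. -/
def SinMidconcaveOn (h : ℝ → ℝ) (s : Set ℝ) : Prop :=
  ∀ x ∈ s, ∀ y ∈ s, |y - x| < π → h x + h y ≤ 2 * cos ((y - x) / 2) * h ((x + y) / 2)

variable {h : ℝ → ℝ} {s t : Set ℝ} {a b w x y : ℝ}

lemma SinConcaveOn.sinMidconcaveOn {N : ℝ} {f : ℝ → ℝ} (hf : SinConcaveOn N f s) :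
    SinMidconcaveOn (fun x => f x ^ (1 / N)) s := by
  intro x hx y hy hxy
  have hcos : 0 < cos (|y - x| / 2) :=
    cos_pos_of_mem_Ioo ⟨by linarith [abs_nonneg (y - x), pi_pos], by linarith⟩
  have hmid := hf x hx y hy
  rw [div_le_iff₀ (by positivity), mul_comm] at hmid
  rwa [← cos_abs ((y - x) / 2), abs_div, abs_two]

lemma SinMidconcaveOn.mono (hh : SinMidconcaveOn h t) (hst : s ⊆ t) : SinMidconcaveOn h s :=
  fun x hx y hy => hh x (hst hx) y (hst hy)

lemma SinMidconcaveOn.const_mul_sub_sinusoids {k : ℝ} (hh : SinMidconcaveOn h s) (hk : 0 ≤ k)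
    (p q α β : ℝ) :
    SinMidconcaveOn (fun z => k * h z - p * sin (α - z) - q * sin (z - β)) s := by
  intro x hx y hy hxy
  have hα : sin (α - x) + sin (α - y) = 2 * cos ((y - x) / 2) * sin (α - (x + y) / 2) := by
    rw [sin_add_sin]; ring_nf
  have hβ : sin (x - β) + sin (y - β) = 2 * cos ((y - x) / 2) * sin ((x + y) / 2 - β) := by
    rw [add_comm, sin_add_sin]; ring_nf
  linear_combination k * hh x hx y hy hxy - p * hα - q * hβ

/-- Minimum principle: compare `h` with the positive cosine centred at the midpoint of `[w, y]`.
Were the minimum `m` of the quotient negative and attained at `z`, midconcavity on the largest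
interval centred at `z`, one end of which is `w` or `y`, would be violated. -/
lemma SinMidconcaveOn.nonneg_of_endpoints (hh : SinMidconcaveOn h (Icc w y))
    (hc : ContinuousOn h (Icc w y)) (hlen : y - w < π) (hw : 0 ≤ h w) (hy : 0 ≤ h y)
    (hx : x ∈ Icc w y) : 0 ≤ h x := by
  set c : ℝ → ℝ := fun z => cos (z - (w + y) / 2)
  have hcpos : ∀ z ∈ Icc w y, 0 < c z := fun z hz =>
    cos_pos_of_mem_Ioo ⟨by linarith [hz.1], by linarith [hz.2]⟩
  have hquot : ContinuousOn (fun z => h z / c z) (Icc w y) :=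
    hc.div (by fun_prop) fun z hz => (hcpos z hz).ne'
  obtain ⟨z, hz, hmin⟩ := isCompact_Icc.exists_isMinOn ⟨x, hx⟩ hquot
  set m := h z / c z with hm
  have hmle : ∀ p ∈ Icc w y, m * c p ≤ h p := fun p hp => (le_div_iff₀ (hcpos p hp)).1 (hmin hp)
  suffices 0 ≤ m from (mul_nonneg this (hcpos x hx).le).trans (hmle x hx)
  by_contra! hm0
  have hlt : ∀ p ∈ Icc w y, 0 ≤ h p → m * c p < h p := fun p hp hhp =>
    (mul_neg_of_neg_of_pos hm0 (hcpos p hp)).trans_le hhp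
  have hmid : ∀ p ∈ Icc w y, ∀ q ∈ Icc w y, (p + q) / 2 = z →
      h p + h q ≤ m * c p + m * c q := by
    intro p hp q hq hpq
    have hcc : c p + c q = 2 * cos ((q - p) / 2) * c z := by
      simp only [c, ← hpq]
      rw [add_comm, cos_add_cos]
      ring_nf
    calc h p + h q ≤ 2 * cos ((q - p) / 2) * h z := by
          simpa only [hpq] using hh p hp q hq
            (abs_lt.2 ⟨by linarith [hp.2, hq.1], by linarith [hp.1, hq.2]⟩)
      _ = m * c p + m * c q := by
          rw [← mul_add, hcc, hm]; field_simp [(hcpos z hz).ne']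
  have hwI : w ∈ Icc w y := left_mem_Icc.2 (hx.1.trans hx.2)
  have hyI : y ∈ Icc w y := right_mem_Icc.2 (hx.1.trans hx.2)
  rcases le_total (z - w) (y - z) with hzw | hzy
  · have hq : 2 * z - w ∈ Icc w y := ⟨by linarith [hz.1], by linarith⟩
    linarith [hmid w hwI _ hq (by ring), hlt w hwI hw, hmle _ hq]
  · have hp : 2 * z - y ∈ Icc w y := ⟨by linarith, by linarith [hz.2]⟩
    linarith [hmid _ hp y hyI (by ring), hlt y hyI hy, hmle _ hp]

lemma SinMidconcaveOn.three_point [s.OrdConnected] (hh : SinMidconcaveOn h s)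
    (hc : ContinuousOn h s) (hw : w ∈ s) (hy : y ∈ s) (hx : x ∈ Icc w y) (hlen : y - w < π) :
    sin (y - x) * h w + sin (x - w) * h y ≤ sin (y - w) * h x := by
  have hsub : Icc w y ⊆ s := OrdConnected.out ‹_› hw hy
  have hsin : 0 ≤ sin (y - w) :=
    sin_nonneg_of_nonneg_of_le_pi (by linarith [hx.1, hx.2]) hlen.le
  have hnonneg := ((hh.mono hsub).const_mul_sub_sinusoids hsin (h w) (h y) y w).nonneg_of_endpoints
    (by have := hc.mono hsub; fun_prop) hlen (by simp [mul_comm]) (by simp [mul_comm]) hx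
  linarith

lemma SinMidconcaveOn.pos_of_exists_pos (hh : SinMidconcaveOn h (Ioo a b))
    (hc : ContinuousOn h (Ioo a b)) (hlen : b - a ≤ π) (h0 : ∀ z ∈ Ioo a b, 0 ≤ h z)
    (hpos : ∃ z ∈ Ioo a b, 0 < h z) (hx : x ∈ Ioo a b) : 0 < h x := by
  obtain ⟨z, hz, hhz⟩ := hpos
  have hsin : ∀ p ∈ Ioo a b, ∀ q ∈ Ioo a b, p < q → 0 < sin (q - p) := fun p hp q hq hpq =>
    sin_pos_of_pos_of_lt_pi (by linarith) (by linarith [hp.1, hq.2])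
  rcases lt_trichotomy z x with hzx | rfl | hxz
  · obtain ⟨y, hxy, hyb⟩ := exists_between hx.2
    have hy : y ∈ Ioo a b := ⟨hx.1.trans hxy, hyb⟩
    refine pos_of_mul_pos_right ?_ (hsin z hz y hy (hzx.trans hxy)).le
    exact (add_pos_of_pos_of_nonneg (mul_pos (hsin x hx y hy hxy) hhz)
      (mul_nonneg (hsin z hz x hx hzx).le (h0 y hy))).trans_le
      (hh.three_point hc hz hy ⟨hzx.le, hxy.le⟩ (by linarith [hz.1, hy.2]))
  · exact hhz
  · obtain ⟨w, haw, hwx⟩ := exists_between hx.1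
    have hw : w ∈ Ioo a b := ⟨haw, hwx.trans hx.2⟩
    refine pos_of_mul_pos_right ?_ (hsin w hw z hz (hwx.trans hxz)).le
    exact (add_pos_of_nonneg_of_pos (mul_nonneg (hsin x hx z hz hxz).le (h0 w hw))
      (mul_pos (hsin w hw x hx hwx) hhz)).trans_le
      (hh.three_point hc hw hz ⟨hwx.le, hxz.le⟩ (by linarith [hw.1, hz.2]))

lemma SinMidconcaveOn.exists_le_sinusoid (hh : SinMidconcaveOn h (Ioo a b))
    (hc : ContinuousOn h (Ioo a b)) (hlen : b - a ≤ π) (hx : x ∈ Ioo a b) :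
    ∃ k, ∀ t ∈ Ioo a b, h t ≤ h x * cos (t - x) + k * sin (t - x) := by
  -- The coefficient of the sinusoid that passes through `(x, h x)` and `(t, h t)`.
  set q : ℝ → ℝ := fun t => (h t - h x * cos (t - x)) / sin (t - x)
  have hneg : ∀ w ∈ Ioo a x, sin (w - x) < 0 := fun w hw =>
    sin_neg_of_neg_of_neg_pi_lt (by linarith [hw.2]) (by linarith [hw.1, hx.2])
  have hpos : ∀ y ∈ Ioo x b, 0 < sin (y - x) := fun y hy =>
    sin_pos_of_pos_of_lt_pi (by linarith [hy.1]) (by linarith [hy.2, hx.1])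
  have hq : ∀ r ∈ q '' Ioo x b, ∀ l ∈ q '' Ioo a x, r ≤ l := by
    rintro _ ⟨y, hy, rfl⟩ _ ⟨w, hw, rfl⟩
    have h3 := hh.three_point hc ⟨hw.1, hw.2.trans hx.2⟩ ⟨hx.1.trans hy.1, hy.2⟩
      ⟨hw.2.le, hy.1.le⟩ (by linarith [hw.1, hy.2])
    have hadd : sin (y - w) = sin (y - x) * cos (w - x) - cos (y - x) * sin (w - x) := by
      rw [← sin_sub, sub_sub_sub_cancel_right]
    rw [hadd, ← neg_sub w x, sin_neg] at h3
    rw [le_div_iff_of_neg (hneg w hw), div_mul_eq_mul_div, le_div_iff₀ (hpos y hy)]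
    linarith
  obtain ⟨k, hkr, hkl⟩ := exists_between_of_forall_le ((nonempty_Ioo.2 hx.2).image q)
    ((nonempty_Ioo.2 hx.1).image q) hq
  refine ⟨k, fun t ht => ?_⟩
  rcases lt_trichotomy t x with htx | rfl | hxt
  · have := (le_div_iff_of_neg (hneg t ⟨ht.1, htx⟩)).1 (hkl (mem_image_of_mem q ⟨ht.1, htx⟩))
    linarith
  · simp
  · have := (div_le_iff₀ (hpos t ⟨hxt, ht.2⟩)).1 (hkr (mem_image_of_mem q ⟨hxt, ht.2⟩))
    linarith

lemma mem_Icc_of_cos_nonneg (hcos : 0 ≤ cos x) (hx : |x| < π + π / 2) :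
    x ∈ Icc (-(π / 2)) (π / 2) := by
  refine abs_le.1 ?_
  by_contra! hlt
  exact (cos_neg_of_pi_div_two_lt_of_lt hlt hx).not_ge (by rwa [cos_abs])

lemma SinMidconcaveOn.exists_le_cos (hh : SinMidconcaveOn h (Ioo a b))
    (hc : ContinuousOn h (Ioo a b)) (hlen : b - a ≤ π) (h0 : ∀ t ∈ Ioo a b, 0 ≤ h t)
    (hx : x ∈ Ioo a b) (hhx : 0 < h x) :
    ∃ u ∈ Ioo (-(π / 2)) (π / 2), ∀ t ∈ Ioo a b,
      t - x + u ∈ Icc (-(π / 2)) (π / 2) ∧ h t ≤ h x / cos u * cos (t - x + u) := by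
  obtain ⟨k, hk⟩ := hh.exists_le_sinusoid hc hlen hx
  set u := arctan (-(k / h x))
  have hu : u ∈ Ioo (-(π / 2)) (π / 2) := arctan_mem_Ioo _
  have hcosu : 0 < cos u := cos_pos_of_mem_Ioo hu
  have hkle : ∀ t ∈ Ioo a b, h t ≤ h x / cos u * cos (t - x + u) := by
    intro t ht
    have hsinu : sin u = -(k / h x) * cos u := by
      rw [← tan_arctan (-(k / h x)), tan_mul_cos hcosu.ne']
    refine (hk t ht).trans_eq ?_
    rw [cos_add, hsinu]
    field_simp
    ring
  refine ⟨u, hu, fun t ht => ⟨mem_Icc_of_cos_nonneg ?_ ?_, hkle t ht⟩⟩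
  · exact nonneg_of_mul_nonneg_right ((h0 t ht).trans (hkle t ht)) (div_pos hhx hcosu)
  · rw [abs_lt]
    constructor <;> linarith [ht.1, ht.2, hx.1, hx.2, hu.1, hu.2]

end SinMidconcave

section CosRpow

variable {N : ℝ} {u v : ℝ}

lemma continuous_cos_rpow (hN : 0 ≤ N) : Continuous fun t : ℝ => cos t ^ N :=
  continuous_cos.rpow_const fun _ => Or.inr hN

lemma cos_rpow_nonneg_of_mem_Icc (hu : u ∈ Icc (-(π / 2)) (π / 2)) : 0 ≤ cos u ^ N :=
  rpow_nonneg (cos_nonneg_of_mem_Icc hu) N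

lemma cos_rpow_pos_of_mem_Ioo (hu : u ∈ Ioo (-(π / 2)) (π / 2)) : 0 < cos u ^ N :=
  rpow_pos_of_pos (cos_pos_of_mem_Ioo hu) N

lemma integral_cos_rpow_pos (hN : 0 ≤ N) (hu : -(π / 2) ≤ u) (huv : u < v) (hv : v ≤ π / 2) :
    0 < ∫ t in u..v, cos t ^ N :=
  intervalIntegral.intervalIntegral_pos_of_pos_on
    ((continuous_cos_rpow hN).intervalIntegrable u v)
    (fun _ ht => cos_rpow_pos_of_mem_Ioo ⟨hu.trans_lt ht.1, ht.2.trans_le hv⟩) huv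

lemma intervalIntegral_le_of_le_comp_add {f g : ℝ → ℝ} {p q p' q' s : ℝ} (hpq : p ≤ q)
    (hf : IntervalIntegrable f volume p q) (hg : Continuous g)
    (hg0 : ∀ t ∈ Icc p' q', 0 ≤ g t) (hp : p' ≤ p + s) (hq : q + s ≤ q')
    (hfg : ∀ t ∈ Ioo p q, f t ≤ g (t + s)) : ∫ t in p..q, f t ≤ ∫ t in p'..q', g t :=
  calc ∫ t in p..q, f t ≤ ∫ t in p..q, g (t + s) :=
        intervalIntegral.integral_mono_on_of_le_Ioo hpq hf
          ((hg.comp (continuous_add_const s)).intervalIntegrable p q) hfg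
    _ = ∫ t in (p + s)..(q + s), g t := intervalIntegral.integral_comp_add_right g s
    _ ≤ ∫ t in p'..q', g t := by
        refine intervalIntegral.integral_mono_interval hp (by linarith) hq ?_
          (hg.intervalIntegrable p' q')
        filter_upwards [ae_restrict_mem measurableSet_Ioc] with t ht
        exact hg0 t (Ioc_subset_Icc_self ht)

/-- Log-concavity of `cos ^ N`: its left mass-to-density ratio is nondecreasing. -/
lemma cos_rpow_mul_integral_left_le (hN : 0 ≤ N) (hu : -(π / 2) ≤ u) (huv : u ≤ v)
    (hv : v ≤ π / 2) :
    cos v ^ N * ∫ t in (-(π / 2))..u, cos t ^ N ≤ cos u ^ N * ∫ t in (-(π / 2))..v, cos t ^ N := by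
  have hcosu : 0 ≤ cos u := cos_nonneg_of_mem_Icc ⟨hu, huv.trans hv⟩
  have hcosv : 0 ≤ cos v := cos_nonneg_of_mem_Icc ⟨hu.trans huv, hv⟩
  rw [← intervalIntegral.integral_const_mul, ← intervalIntegral.integral_const_mul]
  refine intervalIntegral_le_of_le_comp_add (s := v - u) hu
    ((continuous_const.mul (continuous_cos_rpow hN)).intervalIntegrable _ _)
    (continuous_const.mul (continuous_cos_rpow hN))
    (fun t ht => mul_nonneg (rpow_nonneg hcosu N)
      (cos_rpow_nonneg_of_mem_Icc ⟨ht.1, ht.2.trans hv⟩))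
    (by linarith) (by linarith) fun t ht => ?_
  have hcost : 0 ≤ cos t := cos_nonneg_of_mem_Icc ⟨ht.1.le, by linarith [ht.2]⟩
  have hcoss : 0 ≤ cos (t + (v - u)) :=
    cos_nonneg_of_mem_Icc ⟨by linarith [ht.1], by linarith [ht.2]⟩
  have hsin : 0 ≤ sin (u - t) * sin (v - u) :=
    mul_nonneg (sin_nonneg_of_nonneg_of_le_pi (by linarith [ht.2]) (by linarith [ht.1]))
      (sin_nonneg_of_nonneg_of_le_pi (by linarith) (by linarith))
  have hprod : cos u * cos (t + (v - u)) - cos v * cos t = sin (u - t) * sin (v - u) := by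
    rw [show cos v = cos (u + (v - u)) by ring_nf, cos_add, cos_add, sin_sub u t]
    ring
  rw [← mul_rpow hcosv hcost, ← mul_rpow hcosu hcoss]
  exact rpow_le_rpow (mul_nonneg hcosv hcost) (by linarith) hN

lemma integral_cos_rpow_neg (N u : ℝ) :
    ∫ t in (-(π / 2))..(-u), cos t ^ N = ∫ t in u..(π / 2), cos t ^ N := by
  simpa only [cos_neg] using (intervalIntegral.integral_comp_neg fun t => cos t ^ N).symm

lemma cos_rpow_mul_integral_right_le (hN : 0 ≤ N) (hv : -(π / 2) ≤ v) (hvu : v ≤ u)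
    (hu : u ≤ π / 2) :
    cos v ^ N * ∫ t in u..(π / 2), cos t ^ N ≤ cos u ^ N * ∫ t in v..(π / 2), cos t ^ N := by
  simpa only [cos_neg, integral_cos_rpow_neg] using
    cos_rpow_mul_integral_left_le hN (neg_le_neg hu) (neg_le_neg hvu) (neg_le.1 hv)

end CosRpow

lemma integral_eq_one_of_isProbabilityMeasure {f : ℝ → ℝ} {a b : ℝ} (hab : a ≤ b)
    (hfc : ContinuousOn f (Icc a b)) (hf0 : ∀ t ∈ Icc a b, 0 ≤ f t)
    [hprob : IsProbabilityMeasure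
      ((volume.restrict (Icc a b)).withDensity (fun t => ENNReal.ofReal (f t)))] :
    ∫ t in a..b, f t = 1 := by
  have huniv := hprob.measure_univ
  rw [withDensity_apply _ .univ, Measure.restrict_univ,
    ← ofReal_integral_eq_lintegral_ofReal hfc.integrableOn_Icc
      (ae_restrict_of_forall_mem measurableSet_Icc hf0), ENNReal.ofReal_eq_one] at huniv
  rw [intervalIntegral.integral_of_le hab, ← integral_Icc_eq_integral_Ioc, huniv]

lemma exists_pos_of_integral_pos {f : ℝ → ℝ} {a b : ℝ} (hab : a ≤ b)
    (hf : ContinuousOn f (Icc a b)) (hpos : 0 < ∫ t in a..b, f t) : ∃ t ∈ Ioo a b, 0 < f t := by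
  by_contra! hle
  refine hpos.not_ge ?_
  simpa using intervalIntegral.integral_mono_on_of_le_Ioo hab
    (hf.intervalIntegrable_of_Icc hab) intervalIntegrable_const hle

section Comparison

variable {N a b x : ℝ} {f : ℝ → ℝ} {s t : Set ℝ}

lemma SinConcaveOn.mono (hf : SinConcaveOn N f t) (hst : s ⊆ t) : SinConcaveOn N f s :=
  fun x hx y hy => hf x (hst hx) y (hst hy)

lemma SinConcaveOn.pos_of_exists_pos (hN : 0 < N) (hlen : b - a ≤ π)
    (hf0 : ∀ t ∈ Ioo a b, 0 ≤ f t) (hfc : ContinuousOn f (Ioo a b))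
    (hf : SinConcaveOn N f (Ioo a b)) (hpos : ∃ t ∈ Ioo a b, 0 < f t) (hx : x ∈ Ioo a b) :
    0 < f x := by
  obtain ⟨t, ht, hft⟩ := hpos
  have hroot : 0 < f x ^ (1 / N) := hf.sinMidconcaveOn.pos_of_exists_pos
    (hfc.rpow_const fun _ _ => Or.inr (by positivity)) hlen
    (fun z hz => rpow_nonneg (hf0 z hz) _) ⟨t, ht, rpow_pos_of_pos hft _⟩ hx
  exact (hf0 x hx).lt_of_ne' fun h => by simp [h, hN.ne'] at hroot

lemma SinConcaveOn.exists_le_cos_rpow (hN : 0 < N) (hlen : b - a ≤ π)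
    (hf0 : ∀ t ∈ Ioo a b, 0 ≤ f t) (hfc : ContinuousOn f (Ioo a b))
    (hf : SinConcaveOn N f (Ioo a b)) (hx : x ∈ Ioo a b) (hfx : 0 < f x) :
    ∃ u ∈ Ioo (-(π / 2)) (π / 2), ∀ t ∈ Ioo a b,
      t - x + u ∈ Icc (-(π / 2)) (π / 2) ∧ f t ≤ f x / cos u ^ N * cos (t - x + u) ^ N := by
  obtain ⟨u, hu, hle⟩ := hf.sinMidconcaveOn.exists_le_cos
    (hfc.rpow_const fun _ _ => Or.inr (by positivity)) hlen
    (fun z hz => rpow_nonneg (hf0 z hz) _) hx (rpow_pos_of_pos hfx _)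
  have hcosu : 0 < cos u := cos_pos_of_mem_Ioo hu
  have hroot : ∀ t ∈ Ioo a b, (f t ^ (1 / N)) ^ N = f t := fun t ht => by
    rw [one_div, rpow_inv_rpow (hf0 t ht) hN.ne']
  refine ⟨u, hu, fun t ht => ⟨(hle t ht).1, ?_⟩⟩
  calc f t = (f t ^ (1 / N)) ^ N := (hroot t ht).symm
    _ ≤ (f x ^ (1 / N) / cos u * cos (t - x + u)) ^ N :=
        rpow_le_rpow (rpow_nonneg (hf0 t ht) _) (hle t ht).2 hN.le
    _ = f x / cos u ^ N * cos (t - x + u) ^ N := by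
        have hfx0 : 0 ≤ f x ^ (1 / N) := rpow_nonneg hfx.le _
        rw [mul_rpow (by positivity) (cos_nonneg_of_mem_Icc (hle t ht).1),
          div_rpow hfx0 hcosu.le, hroot x hx]

lemma SinConcaveOn.exists_integral_le (hN : 0 < N) (hlen : b - a ≤ π)
    (hf0 : ∀ t ∈ Ioo a b, 0 ≤ f t) (hfc : ContinuousOn f (Icc a b))
    (hf : SinConcaveOn N f (Ioo a b)) (hx : x ∈ Ioo a b) (hfx : 0 < f x) :
    ∃ u ∈ Ioo (-(π / 2)) (π / 2),
      (∫ t in a..x, f t ≤ f x / cos u ^ N * ∫ t in (-(π / 2))..u, cos t ^ N) ∧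
      ∫ t in x..b, f t ≤ f x / cos u ^ N * ∫ t in u..(π / 2), cos t ^ N := by
  obtain ⟨u, hu, hle⟩ :=
    hf.exists_le_cos_rpow hN hlen hf0 (hfc.mono Ioo_subset_Icc_self) hx hfx
  have hab : a < b := hx.1.trans hx.2
  have hB : 0 ≤ f x / cos u ^ N := div_nonneg hfx.le (cos_rpow_pos_of_mem_Ioo hu).le
  have hmaps : MapsTo (fun t => t - x + u) (Icc a b) (Icc (-(π / 2)) (π / 2)) := by
    rw [← closure_Ioo hab.ne]
    exact MapsTo.closure_left (fun t ht => (hle t ht).1) (by fun_prop) isClosed_Icc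
  have hshift : ∀ t ∈ Ioo a b, f t ≤ f x / cos u ^ N * cos (t + (u - x)) ^ N := fun t ht => by
    rw [add_sub_left_comm, ← add_comm (t - x)]
    exact (hle t ht).2
  have hcont : Continuous fun t => f x / cos u ^ N * cos t ^ N :=
    continuous_const.mul (continuous_cos_rpow hN.le)
  have hint : ∀ {p q}, p ≤ q → Icc p q ⊆ Icc a b → IntervalIntegrable f volume p q :=
    fun hpq hsub => (hfc.mono (uIcc_of_le hpq ▸ hsub)).intervalIntegrable
  have hnonneg : ∀ t ∈ Icc (-(π / 2)) (π / 2), 0 ≤ f x / cos u ^ N * cos t ^ N :=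
    fun t ht => mul_nonneg hB (cos_rpow_nonneg_of_mem_Icc ht)
  refine ⟨u, hu, ?_, ?_⟩ <;> rw [← intervalIntegral.integral_const_mul]
  · exact intervalIntegral_le_of_le_comp_add (s := u - x) hx.1.le
      (hint hx.1.le (Icc_subset_Icc_right hx.2.le)) hcont
      (fun t ht => hnonneg t ⟨ht.1, ht.2.trans hu.2.le⟩)
      (by linarith [(hmaps (left_mem_Icc.2 hab.le)).1]) (by linarith)
      fun t ht => hshift t ⟨ht.1, ht.2.trans hx.2⟩
  · exact intervalIntegral_le_of_le_comp_add (s := u - x) hx.2.le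
      (hint hx.2.le (Icc_subset_Icc_left hx.1.le)) hcont
      (fun t ht => hnonneg t ⟨hu.1.le.trans ht.1, ht.2⟩) (by linarith)
      (by linarith [(hmaps (right_mem_Icc.2 hab.le)).2])
      fun t ht => hshift t ⟨hx.1.trans ht.1, ht.2⟩

theorem SinConcaveOn.mul_cos_rpow_le {C v : ℝ} (hN : 0 < N) (hlen : b - a ≤ π)
    (hf0 : ∀ t ∈ Ioo a b, 0 ≤ f t) (hfc : ContinuousOn f (Icc a b))
    (hf : SinConcaveOn N f (Ioo a b)) (hx : x ∈ Ioo a b) (hfx : 0 < f x)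
    (hv : v ∈ Ioo (-(π / 2)) (π / 2))
    (hleft : ∫ t in a..x, f t = C * ∫ t in (-(π / 2))..v, cos t ^ N)
    (hright : ∫ t in x..b, f t = C * ∫ t in v..(π / 2), cos t ^ N) : C * cos v ^ N ≤ f x := by
  obtain ⟨u, hu, hL, hR⟩ := hf.exists_integral_le hN hlen hf0 hfc hx hfx
  have hcosu : 0 < cos u ^ N := cos_rpow_pos_of_mem_Ioo hu
  have hcosv : 0 < cos v ^ N := cos_rpow_pos_of_mem_Ioo hv
  have combine : ∀ {Gu Gv : ℝ}, 0 < Gv → C * Gv ≤ f x / cos u ^ N * Gu →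
      cos v ^ N * Gu ≤ cos u ^ N * Gv → C * cos v ^ N ≤ f x := by
    intro Gu Gv hGv hmass hratio
    refine le_of_mul_le_mul_right ?_ hGv
    calc C * cos v ^ N * Gv = cos v ^ N * (C * Gv) := by ring
      _ ≤ cos v ^ N * (f x / cos u ^ N * Gu) := by gcongr
      _ = f x / cos u ^ N * (cos v ^ N * Gu) := by ring
      _ ≤ f x / cos u ^ N * (cos u ^ N * Gv) := by gcongr
      _ = f x * Gv := by field_simp
  rcases le_total u v with huv | hvu
  · exact combine (integral_cos_rpow_pos hN.le le_rfl hv.1 hv.2.le) (hleft ▸ hL)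
      (cos_rpow_mul_integral_left_le hN.le hu.1.le huv hv.2.le)
  · exact combine (integral_cos_rpow_pos hN.le hv.1.le hv.2 le_rfl) (hright ▸ hR)
      (cos_rpow_mul_integral_right_le hN.le hv.1.le hvu hu.2.le)

theorem SinConcaveOn.exists_lipschitzWith_map_withDensity_cos_rpow {C : ℝ} (hN : 0 < N)
    (hab : a ≤ b) (hlen : b - a ≤ π) (hf0 : ∀ t ∈ Ioo a b, 0 ≤ f t)
    (hfc : ContinuousOn f (Icc a b)) (hf : SinConcaveOn N f (Ioo a b)) (hC : 0 < C)
    (hmass : ∫ t in a..b, f t = ∫ t in (-(π / 2))..(π / 2), C * cos t ^ N) :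
    ∃ T : ℝ → ℝ, LipschitzWith 1 T ∧
      ((volume.restrict (Icc (-(π / 2)) (π / 2))).withDensity
          (fun t => ENNReal.ofReal (C * cos t ^ N))).map T =
        (volume.restrict (Icc a b)).withDensity (fun t => ENNReal.ofReal (f t)) := by
  have hcos : ∀ p q : ℝ, IntervalIntegrable (fun t => cos t ^ N) volume p q :=
    (continuous_cos_rpow hN.le).intervalIntegrable
  have hpi : -(π / 2) < π / 2 := by linarith [pi_pos]
  have hmodel : 0 < ∫ t in (-(π / 2))..(π / 2), C * cos t ^ N := by
    rw [intervalIntegral.integral_const_mul]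
    exact mul_pos hC (integral_cos_rpow_pos hN.le le_rfl hpi le_rfl)
  have hfpos : ∀ x ∈ Ioo a b, 0 < f x := fun x hx => hf.pos_of_exists_pos hN hlen hf0
    (hfc.mono Ioo_subset_Icc_self) (exists_pos_of_integral_pos hab hfc (hmass ▸ hmodel)) hx
  refine exists_lipschitzWith_map_withDensity hab hpi.le hfc
    (continuous_const.mul (continuous_cos_rpow hN.le)).continuousOn hfpos
    (fun v hv => mul_pos hC (cos_rpow_pos_of_mem_Ioo hv)) hmass fun x hx v hv hleft => ?_
  have hfint : ∀ p ∈ Icc a b, ∀ q ∈ Icc a b, IntervalIntegrable f volume p q := fun p hp q hq =>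
    (hfc.mono (uIcc_subset_Icc hp hq)).intervalIntegrable
  have hxI : x ∈ Icc a b := Ioo_subset_Icc_self hx
  have hsplit := intervalIntegral.integral_add_adjacent_intervals
    (hfint a (left_mem_Icc.2 hab) x hxI) (hfint x hxI b (right_mem_Icc.2 hab))
  have hsplit' := intervalIntegral.integral_add_adjacent_intervals
    (hcos (-(π / 2)) v) (hcos v (π / 2))
  rw [intervalIntegral.integral_const_mul] at hleft hmass
  exact hf.mul_cos_rpow_le hN hlen hf0 hfc hx (hfpos x hx) hv hleft
    (by linear_combination hsplit - C * hsplit' + hmass - hleft)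

end Comparison

theorem stmt_4_general (N : ℝ) (hN : 0 < N)
    (a b : ℝ) (hab : a ≤ b) (hlen : b - a ≤ π)
    (f : ℝ → ℝ) (hf0 : ∀ x ∈ Icc a b, 0 ≤ f x)
    (hfc : ContinuousOn f (Icc a b)) (hconc : SinConcaveOn N f (Icc a b))
    (ν : Measure ℝ)
    (hν : ν = (volume.restrict (Icc a b)).withDensity (fun t => ENNReal.ofReal (f t)))
    (hνprob : IsProbabilityMeasure ν)
    (C₁ : ℝ) (hC₁ : 0 < C₁) (ν₁ : Measure ℝ)
    (hν₁ : ν₁ = (volume.restrict (Icc (-(π / 2)) (π / 2))).withDensity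
      (fun t => ENNReal.ofReal (C₁ * Real.cos t ^ N)))
    (hν₁prob : IsProbabilityMeasure ν₁)
    (κ1 κ2 : ℝ) (hκ1 : κ1 ∈ Icc (0 : ℝ) 1) (hκ2 : κ2 ∈ Icc (0 : ℝ) 1) :
    sep ν (Icc a b) κ1 κ2 ≤ sep ν₁ (Icc (-(π / 2)) (π / 2)) κ1 κ2 := by
  subst hν hν₁
  have hpi : -(π / 2) ≤ π / 2 := by linarith [pi_pos]
  have hmodel : ContinuousOn (fun t => C₁ * cos t ^ N) (Icc (-(π / 2)) (π / 2)) :=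
    (continuous_const.mul (continuous_cos_rpow hN.le)).continuousOn
  have hmass : ∫ t in a..b, f t = ∫ t in (-(π / 2))..(π / 2), C₁ * cos t ^ N := by
    rw [integral_eq_one_of_isProbabilityMeasure hab hfc hf0,
      integral_eq_one_of_isProbabilityMeasure hpi hmodel
        fun t ht => mul_nonneg hC₁.le (cos_rpow_nonneg_of_mem_Icc ht)]
  obtain ⟨T, hT, hmap⟩ :=
    (hconc.mono Ioo_subset_Icc_self).exists_lipschitzWith_map_withDensity_cos_rpow hN hab hlen
      (fun t ht => hf0 t (Ioo_subset_Icc_self ht)) hfc hC₁ hmass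
  rw [← hmap]
  exact sep_map_le_of_lipschitzWith hT measurableSet_Icc (Metric.isBounded_Icc _ _)
    (withDensity_absolutelyContinuous _ _ (by simp)) hκ1.1 hκ2.1

theorem stmt_4 (N : ℝ) (hN : 1 ≤ N)
    (a b : ℝ) (hab : a ≤ b) (hlen : b - a ≤ π)
    (f : ℝ → ℝ) (hf0 : ∀ x ∈ Icc a b, 0 ≤ f x)
    (hfc : ContinuousOn f (Icc a b)) (hconc : SinConcaveOn N f (Icc a b))
    (ν : Measure ℝ)
    (hν : ν = (volume.restrict (Icc a b)).withDensity (fun t => ENNReal.ofReal (f t)))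
    (hνprob : IsProbabilityMeasure ν)
    (C₁ : ℝ) (hC₁ : 0 < C₁) (ν₁ : Measure ℝ)
    (hν₁ : ν₁ = (volume.restrict (Icc (-(π / 2)) (π / 2))).withDensity
      (fun t => ENNReal.ofReal (C₁ * Real.cos t ^ N)))
    (hν₁prob : IsProbabilityMeasure ν₁)
    (κ1 κ2 : ℝ) (hκ1 : κ1 ∈ Icc (0 : ℝ) 1) (hκ2 : κ2 ∈ Icc (0 : ℝ) 1)
    (hκ1half : κ1 ≤ 1 / 2) (hκ2half : 1 / 2 ≤ κ2) :
    sep ν (Icc a b) κ1 κ2 ≤ sep ν₁ (Icc (-(π / 2)) (π / 2)) κ1 κ2 := by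
  exact stmt_4_general N (by linarith) a b hab hlen f hf0 hfc hconc ν hν hνprob C₁ hC₁ ν₁
    hν₁ hν₁prob κ1 κ2 hκ1 hκ2
end
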